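/- Let k, l, p, r : T → ℝ be continuous, with l_x and p_x (partial derivatives with respect to the first argument) also continuous on T. Then there exist constants c₁, …, c₆ > 0 such that for all continuously differentiable functions ω̂, ω̃ : [0,1] → ℝ and every x ∈ [0,1], the function G[ω̂, ω̃](x) = ℛ[𝒫[ω̃](ω̃' + 𝒫₁[ω̃])](x) + ℛ[𝒫[ω̃](ω̂' + 𝓛₁[ω̂])](x) + ℛ[𝓛[ω̂](ω̃' + 𝒫₁[ω̃])](x) − ℛ[𝓛[ω̂](ω̂' + 𝓛₁[ω̂])](x) satisfies |G[ω̂, ω̃](x)| ≤ c₁(‖ω̃‖_{L²} + |ω̃(x)|)(‖ω̃'‖_{L²} + |ω̃'(x)|) + c₂(‖ω̃‖²_{L²} + |ω̃(x)|²) + c₃(‖ω̃'‖²_{L²} + |ω̃'(x)|²) + c₄(‖ω̂‖_{L²} + |ω̂(x)|)(‖ω̂'‖_{L²} + |ω̂'(x)|) + c₅(‖ω̂‖²_{L²} + |ω̂(x)|²) + c₆(‖ω̂'‖²_{L²} + |ω̂'(x)|²). -/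

import Mathlib

open MeasureTheory

noncomputable section

/-- The closed triangle `T = {(x, y) : 0 ≤ x ≤ y ≤ 1}`. -/
def T : Set (ℝ × ℝ) := {q : ℝ × ℝ | 0 ≤ q.1 ∧ q.1 ≤ q.2 ∧ q.2 ≤ 1}

/-- Partial derivative in the first variable. -/
def pdx (f : ℝ → ℝ → ℝ) (x y : ℝ) : ℝ := deriv (fun x' => f x' y) x

/-- The `L²(0,1)` norm. -/
def L2norm (f : ℝ → ℝ) : ℝ := (∫ x in (0:ℝ)..1, f x ^ 2) ^ (1/2 : ℝ)

/-- The functional `𝒦[v](x) = v(x) - ∫_x^1 k(x,y) v(y) dy`. -/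
def opK (k : ℝ → ℝ → ℝ) (v : ℝ → ℝ) (x : ℝ) : ℝ := v x - ∫ y in x..1, k x y * v y

/-- The functional `𝓛[v](x) = v(x) + ∫_x^1 l(x,y) v(y) dy`. -/
def opL (l : ℝ → ℝ → ℝ) (v : ℝ → ℝ) (x : ℝ) : ℝ := v x + ∫ y in x..1, l x y * v y

/-- The functional `𝓛₁[v](x) = l(x,x) v(x) + ∫_x^1 l_x(x,y) v(y) dy`. -/
def opL1 (l : ℝ → ℝ → ℝ) (v : ℝ → ℝ) (x : ℝ) : ℝ :=
  l x x * v x + ∫ y in x..1, pdx l x y * v y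

/-- The functional `𝒫[v](x) = v(x) - ∫_x^1 p(x,y) v(y) dy`. -/
def opP (p : ℝ → ℝ → ℝ) (v : ℝ → ℝ) (x : ℝ) : ℝ := v x - ∫ y in x..1, p x y * v y

/-- The functional `ℛ[v](x) = v(x) + ∫_x^1 r(x,y) v(y) dy`. -/
def opR (r : ℝ → ℝ → ℝ) (v : ℝ → ℝ) (x : ℝ) : ℝ := v x + ∫ y in x..1, r x y * v y

/-- The functional `𝒫₁[v](x) = p(x,x) v(x) - ∫_x^1 p_x(x,y) v(y) dy`. -/
def opP1 (p : ℝ → ℝ → ℝ) (v : ℝ → ℝ) (x : ℝ) : ℝ :=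
  p x x * v x - ∫ y in x..1, pdx p x y * v y

/-!
A bounded kernel on `T` turns a square integrable `v` into a Volterra integral bounded by a
multiple of `‖v‖_{L²}`, so the square of every factor occurring under `ℛ` is dominated pointwise by
a multiple of the energy `E(x) = ∑ (‖v‖²_{L²} + |v(x)|²)`, summed over `v = ω̃, ω̃', ω̂, ω̂'`. By
Young's inequality so is each product of two factors. Applying `ℛ` costs only a constant, since
`∫₀¹ E = 2 ∑ ‖v‖²_{L²} ≤ 2 E(x)` for every `x`.
-/

/-- The nonlinear functional `G[ω̂, ω̃](x)`. -/
def G (l p r : ℝ → ℝ → ℝ) (wh wt : ℝ → ℝ) (x : ℝ) : ℝ :=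
  opR r (fun x' => opP p wt x' * (deriv wt x' + opP1 p wt x')) x
    + opR r (fun x' => opP p wt x' * (deriv wh x' + opL1 l wh x')) x
    + opR r (fun x' => opL l wh x' * (deriv wt x' + opP1 p wt x')) x
    - opR r (fun x' => opL l wh x' * (deriv wh x' + opL1 l wh x')) x

/-! ### Kernels on the triangle -/

/-- `M` bounds the kernel `k` on the triangle `T`; values of `k` off `T` are unconstrained. -/
def IsKernelBound (k : ℝ → ℝ → ℝ) (M : ℝ) : Prop :=
  ∀ ⦃x y : ℝ⦄, (x, y) ∈ T → |k x y| ≤ M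

/-- A bounded Borel measurable kernel on `T`. Measurability makes the Volterra integrals
`∫ y in x..1, k x y * v y` genuine ones instead of the junk value `0`. -/
structure IsBoundedKernel (k : ℝ → ℝ → ℝ) : Prop where
  measurable : Measurable (T.domRestrict (Function.uncurry k))
  exists_bound : ∃ M, IsKernelBound k M

lemma isCompact_T : IsCompact T := by
  refine (isCompact_Icc (a := ((0, 0) : ℝ × ℝ)) (b := (1, 1))).of_isClosed_subset ?_ ?_
  · exact (isClosed_le continuous_const continuous_fst).inter
      ((isClosed_le continuous_fst continuous_snd).inter
        (isClosed_le continuous_snd continuous_const))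
  · rintro ⟨x, y⟩ ⟨hx, hxy, hy⟩
    exact ⟨⟨hx, hx.trans hxy⟩, ⟨hxy.trans hy, hy⟩⟩

lemma diag_mem_T {x : ℝ} (hx : x ∈ Set.Icc (0 : ℝ) 1) : (x, x) ∈ T :=
  ⟨hx.1, le_rfl, hx.2⟩

lemma IsKernelBound.nonneg {k : ℝ → ℝ → ℝ} {M : ℝ} (hk : IsKernelBound k M) : 0 ≤ M :=
  (abs_nonneg _).trans (hk (diag_mem_T (Set.left_mem_Icc.2 zero_le_one)))

lemma IsKernelBound.neg {k : ℝ → ℝ → ℝ} {M : ℝ} (hk : IsKernelBound k M) :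
    IsKernelBound (-k) M := fun x y hxy => by
  simpa only [Pi.neg_apply, abs_neg] using hk hxy

lemma isBoundedKernel_of_continuousOn {k : ℝ → ℝ → ℝ}
    (hk : ContinuousOn (Function.uncurry k) T) : IsBoundedKernel k where
  measurable := hk.domRestrict.measurable
  exists_bound :=
    let ⟨M, hM⟩ := isCompact_T.exists_bound_of_continuousOn hk
    ⟨M, fun x y hxy => hM (x, y) hxy⟩

lemma IsBoundedKernel.eventually_isKernelBound {k : ℝ → ℝ → ℝ} (hk : IsBoundedKernel k) :
    ∀ᶠ M in Filter.atTop, IsKernelBound k M := by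
  obtain ⟨M, hM⟩ := hk.exists_bound
  exact (Filter.eventually_ge_atTop M).mono fun N hN x y hxy => (hM hxy).trans hN

/-! ### Square integrable functions on the unit interval -/

/-- Square integrability on `(0, 1)`, the class on which `L2norm` is the actual `L²` norm. -/
abbrev SqIntegrable (v : ℝ → ℝ) : Prop :=
  MemLp v 2 (volume.restrict (Set.Ioc 0 1))

/-- A function differentiable at every point of `[0, 1]` whose derivative is square integrable.
Differentiability is two-sided at the endpoints, as `deriv` is. -/
structure HasSqIntegrableDeriv (v : ℝ → ℝ) : Prop where
  differentiableAt : ∀ x ∈ Set.Icc (0 : ℝ) 1, DifferentiableAt ℝ v x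
  sqIntegrable_deriv : SqIntegrable (deriv v)

lemma sqIntegrable_of_continuousOn {v : ℝ → ℝ} (hv : ContinuousOn v (Set.Icc 0 1)) :
    SqIntegrable v := by
  obtain ⟨C, hC⟩ := isCompact_Icc.exists_bound_of_continuousOn hv
  exact .of_bound ((hv.mono Set.Ioc_subset_Icc_self).aestronglyMeasurable measurableSet_Ioc) C
    (ae_restrict_of_forall_mem measurableSet_Ioc fun x hx => hC x (Set.Ioc_subset_Icc_self hx))

lemma HasSqIntegrableDeriv.sqIntegrable {v : ℝ → ℝ} (hv : HasSqIntegrableDeriv v) :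
    SqIntegrable v :=
  sqIntegrable_of_continuousOn fun x hx =>
    (hv.differentiableAt x hx).continuousAt.continuousWithinAt

lemma hasSqIntegrableDeriv_of_contDiff {v : ℝ → ℝ} (hv : ContDiff ℝ 1 v) :
    HasSqIntegrableDeriv v where
  differentiableAt _ _ := hv.differentiable one_ne_zero _
  sqIntegrable_deriv := sqIntegrable_of_continuousOn (hv.continuous_deriv le_rfl).continuousOn

lemma SqIntegrable.intervalIntegrable_sq {v : ℝ → ℝ} (hv : SqIntegrable v) :
    IntervalIntegrable (fun x => v x ^ 2) volume 0 1 :=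
  (intervalIntegrable_iff_integrableOn_Ioc_of_le zero_le_one).2 hv.integrable_sq

lemma SqIntegrable.intervalIntegrable_abs {v : ℝ → ℝ} (hv : SqIntegrable v) :
    IntervalIntegrable (fun x => |v x|) volume 0 1 :=
  (intervalIntegrable_iff_integrableOn_Ioc_of_le zero_le_one).2 (hv.integrable one_le_two).abs

lemma L2norm_nonneg (v : ℝ → ℝ) : 0 ≤ L2norm v :=
  Real.rpow_nonneg (intervalIntegral.integral_nonneg zero_le_one fun _ _ => sq_nonneg _) _

lemma L2norm_sq (v : ℝ → ℝ) : L2norm v ^ 2 = ∫ x in (0 : ℝ)..1, v x ^ 2 := by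
  rw [L2norm, ← Real.sqrt_eq_rpow, Real.sq_sqrt]
  exact intervalIntegral.integral_nonneg zero_le_one fun _ _ => sq_nonneg _

-- Nonnegativity of the variance of `|v|` under the uniform probability measure on `(0, 1)`.
lemma sq_integral_abs_le_L2norm_sq {v : ℝ → ℝ} (hv : SqIntegrable v) :
    (∫ y in (0 : ℝ)..1, |v y|) ^ 2 ≤ L2norm v ^ 2 := by
  have : IsProbabilityMeasure (volume.restrict (Set.Ioc (0 : ℝ) 1)) := ⟨by simp⟩
  have hvar := ProbabilityTheory.variance_nonneg |v| (volume.restrict (Set.Ioc 0 1))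
  rw [ProbabilityTheory.variance_eq_sub hv.abs] at hvar
  rw [L2norm_sq, intervalIntegral.integral_of_le zero_le_one,
    intervalIntegral.integral_of_le zero_le_one]
  simpa only [Pi.pow_apply, Pi.abs_apply, sq_abs, sub_nonneg] using hvar

/-! ### Volterra integrals -/

lemma abs_integral_kernel_mul_le {k : ℝ → ℝ → ℝ} {M : ℝ} (hk : IsKernelBound k M)
    {f g : ℝ → ℝ} (hg : IntervalIntegrable g volume 0 1)
    (hfg : ∀ y ∈ Set.Icc (0 : ℝ) 1, |f y| ≤ g y) {x : ℝ} (hx : x ∈ Set.Icc (0 : ℝ) 1) :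
    |∫ y in x..1, k x y * f y| ≤ M * ∫ y in (0 : ℝ)..1, g y := by
  have hM := hk.nonneg
  have hMg : IntervalIntegrable (fun y => M * g y) volume 0 1 := hg.const_mul M
  have hsub : Set.uIcc x 1 ⊆ Set.uIcc 0 1 :=
    Set.uIcc_subset_uIcc_right (by rwa [Set.uIcc_of_le zero_le_one])
  calc |∫ y in x..1, k x y * f y|
      ≤ ∫ y in x..1, M * g y := by
        rw [← Real.norm_eq_abs]
        refine intervalIntegral.norm_integral_le_of_norm_le hx.2
          (Filter.Eventually.of_forall fun y hy => ?_) (hMg.mono_set hsub)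
        rw [Real.norm_eq_abs, abs_mul]
        exact mul_le_mul (hk ⟨hx.1, hy.1.le, hy.2⟩) (hfg y ⟨hx.1.trans hy.1.le, hy.2⟩)
          (abs_nonneg _) hM
    _ ≤ ∫ y in (0 : ℝ)..1, M * g y := by
        refine intervalIntegral.integral_mono_interval hx.1 hx.2 le_rfl
          (ae_restrict_of_forall_mem measurableSet_Ioc fun y hy => ?_) hMg
        exact mul_nonneg hM ((abs_nonneg _).trans (hfg y (Set.Ioc_subset_Icc_self hy)))
    _ = M * ∫ y in (0 : ℝ)..1, g y := intervalIntegral.integral_const_mul _ _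

lemma sq_integral_kernel_mul_le {k : ℝ → ℝ → ℝ} {M : ℝ} (hk : IsKernelBound k M)
    {v : ℝ → ℝ} (hv : SqIntegrable v) {x : ℝ} (hx : x ∈ Set.Icc (0 : ℝ) 1) :
    (∫ y in x..1, k x y * v y) ^ 2 ≤ M ^ 2 * L2norm v ^ 2 :=
  calc (∫ y in x..1, k x y * v y) ^ 2
      ≤ (M * ∫ y in (0 : ℝ)..1, |v y|) ^ 2 :=
        sq_le_sq.2 ((abs_integral_kernel_mul_le hk hv.intervalIntegrable_abs
          (fun _ _ => le_rfl) hx).trans (le_abs_self _))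
    _ ≤ M ^ 2 * L2norm v ^ 2 := by
        rw [mul_pow]
        exact mul_le_mul_of_nonneg_left (sq_integral_abs_le_L2norm_sq hv) (sq_nonneg M)

lemma abs_opR_le {r : ℝ → ℝ → ℝ} {M : ℝ} (hr : IsKernelBound r M) {f g : ℝ → ℝ}
    (hg : IntervalIntegrable g volume 0 1) (hfg : ∀ y ∈ Set.Icc (0 : ℝ) 1, |f y| ≤ g y)
    {x : ℝ} (hx : x ∈ Set.Icc (0 : ℝ) 1) :
    |opR r f x| ≤ g x + M * ∫ y in (0 : ℝ)..1, g y :=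
  (abs_add_le _ _).trans (add_le_add (hfg x hx) (abs_integral_kernel_mul_le hr hg hfg hx))

lemma abs_opR_mul_le {r : ℝ → ℝ → ℝ} {M : ℝ} (hr : IsKernelBound r M) {A B g : ℝ → ℝ}
    (hg : IntervalIntegrable g volume 0 1) (hA : ∀ y ∈ Set.Icc (0 : ℝ) 1, A y ^ 2 ≤ g y)
    (hB : ∀ y ∈ Set.Icc (0 : ℝ) 1, B y ^ 2 ≤ g y) {x : ℝ} (hx : x ∈ Set.Icc (0 : ℝ) 1) :
    |opR r (fun y => A y * B y) x| ≤ g x + M * ∫ y in (0 : ℝ)..1, g y := by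
  refine abs_opR_le hr hg (fun y hy => ?_) hx
  have young := two_mul_le_add_sq |A y| |B y|
  rw [sq_abs, sq_abs] at young
  rw [abs_mul]
  linarith [hA y hy, hB y hy]

/-! ### Energies -/

/-- The quantity `‖v‖²_{L²} + |v(x)|²`, which controls the squares of all the functionals of `v`
at `x`. -/
def energy (v : ℝ → ℝ) (x : ℝ) : ℝ := L2norm v ^ 2 + |v x| ^ 2

/-- The first order analogue of `energy`, in which the derivative is measured as well. -/
def energyH1 (v : ℝ → ℝ) (x : ℝ) : ℝ := energy v x + energy (deriv v) x

lemma energy_nonneg (v : ℝ → ℝ) (x : ℝ) : 0 ≤ energy v x := by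
  unfold energy
  positivity

lemma energyH1_nonneg (v : ℝ → ℝ) (x : ℝ) : 0 ≤ energyH1 v x :=
  add_nonneg (energy_nonneg _ _) (energy_nonneg _ _)

lemma SqIntegrable.intervalIntegrable_energy {v : ℝ → ℝ} (hv : SqIntegrable v) :
    IntervalIntegrable (energy v) volume 0 1 := by
  unfold energy
  simpa only [sq_abs] using intervalIntegrable_const.add hv.intervalIntegrable_sq

lemma SqIntegrable.integral_energy_le {v : ℝ → ℝ} (hv : SqIntegrable v) (x : ℝ) :
    ∫ y in (0 : ℝ)..1, energy v y ≤ 2 * energy v x := by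
  have hint : ∫ y in (0 : ℝ)..1, energy v y = 2 * L2norm v ^ 2 := by
    simp only [energy, sq_abs]
    rw [intervalIntegral.integral_add intervalIntegrable_const hv.intervalIntegrable_sq,
      intervalIntegral.integral_const, sub_zero, one_smul, ← L2norm_sq v, two_mul]
  rw [hint, energy]
  linarith [sq_nonneg |v x|]

lemma HasSqIntegrableDeriv.intervalIntegrable_energyH1 {v : ℝ → ℝ}
    (hv : HasSqIntegrableDeriv v) : IntervalIntegrable (energyH1 v) volume 0 1 :=
  hv.sqIntegrable.intervalIntegrable_energy.add hv.sqIntegrable_deriv.intervalIntegrable_energy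

lemma HasSqIntegrableDeriv.integral_energyH1_le {v : ℝ → ℝ} (hv : HasSqIntegrableDeriv v)
    (x : ℝ) : ∫ y in (0 : ℝ)..1, energyH1 v y ≤ 2 * energyH1 v x := by
  simp only [energyH1]
  rw [intervalIntegral.integral_add hv.sqIntegrable.intervalIntegrable_energy
    hv.sqIntegrable_deriv.intervalIntegrable_energy]
  linarith [hv.sqIntegrable.integral_energy_le x, hv.sqIntegrable_deriv.integral_energy_le x]

section PointwiseBounds

variable {k : ℝ → ℝ → ℝ} {M : ℝ} {v : ℝ → ℝ} {x : ℝ}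

lemma sq_add_mul_add_integral_le (hM : 1 ≤ M) (hk : IsKernelBound k M) (hv : SqIntegrable v)
    (hx : x ∈ Set.Icc (0 : ℝ) 1) {d : ℝ} (hd : |d| ≤ M) (a : ℝ) :
    (a + (d * v x + ∫ y in x..1, k x y * v y)) ^ 2 ≤ 3 * M ^ 2 * (a ^ 2 + energy v x) := by
  set I := ∫ y in x..1, k x y * v y
  have ha : a ^ 2 ≤ M ^ 2 * a ^ 2 := le_mul_of_one_le_left (sq_nonneg a) (one_le_pow₀ hM)
  have hdv : (d * v x) ^ 2 ≤ M ^ 2 * v x ^ 2 := by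
    rw [mul_pow]
    exact mul_le_mul_of_nonneg_right (sq_le_sq.2 (hd.trans (le_abs_self M))) (sq_nonneg _)
  have hI : I ^ 2 ≤ M ^ 2 * L2norm v ^ 2 := sq_integral_kernel_mul_le hk hv hx
  calc (a + (d * v x + I)) ^ 2
      ≤ 3 * (a ^ 2 + (d * v x) ^ 2 + I ^ 2) := by
        linarith [sq_nonneg (a - d * v x), sq_nonneg (a - I), sq_nonneg (d * v x - I)]
    _ ≤ 3 * M ^ 2 * (a ^ 2 + energy v x) := by
        rw [energy, sq_abs]
        linarith

lemma sq_opL_le (hM : 1 ≤ M) (hk : IsKernelBound k M) (hv : SqIntegrable v)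
    (hx : x ∈ Set.Icc (0 : ℝ) 1) : opL k v x ^ 2 ≤ 3 * M ^ 2 * energy v x := by
  simpa [opL] using sq_add_mul_add_integral_le hM hk hv hx (d := 1) (by simpa using hM) 0

lemma sq_opP_le (hM : 1 ≤ M) (hk : IsKernelBound k M) (hv : SqIntegrable v)
    (hx : x ∈ Set.Icc (0 : ℝ) 1) : opP k v x ^ 2 ≤ 3 * M ^ 2 * energy v x := by
  simpa [opP, opL, sub_eq_add_neg] using sq_opL_le hM hk.neg hv hx

lemma sq_add_opL1_le (hM : 1 ≤ M) (hk : IsKernelBound k M) (hkx : IsKernelBound (pdx k) M)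
    (hv : SqIntegrable v) (hx : x ∈ Set.Icc (0 : ℝ) 1) (a : ℝ) :
    (a + opL1 k v x) ^ 2 ≤ 3 * M ^ 2 * (a ^ 2 + energy v x) :=
  sq_add_mul_add_integral_le hM hkx hv hx (hk (diag_mem_T hx)) a

lemma sq_add_opP1_le (hM : 1 ≤ M) (hk : IsKernelBound k M) (hkx : IsKernelBound (pdx k) M)
    (hv : SqIntegrable v) (hx : x ∈ Set.Icc (0 : ℝ) 1) (a : ℝ) :
    (a + opP1 k v x) ^ 2 ≤ 3 * M ^ 2 * (a ^ 2 + energy v x) := by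
  simpa [opP1, sub_eq_add_neg] using
    sq_add_mul_add_integral_le hM hkx.neg hv hx (hk (diag_mem_T hx)) a

end PointwiseBounds

lemma energy_le_energyH1 (v : ℝ → ℝ) (x : ℝ) : energy v x ≤ energyH1 v x :=
  le_add_of_nonneg_right (energy_nonneg _ _)

lemma sq_deriv_add_energy_le_energyH1 (v : ℝ → ℝ) (x : ℝ) :
    deriv v x ^ 2 + energy v x ≤ energyH1 v x := by
  have hderiv : deriv v x ^ 2 ≤ energy (deriv v) x := by
    rw [energy, sq_abs]
    exact le_add_of_nonneg_left (sq_nonneg _)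
  rw [energyH1]
  linarith

/-! ### The nonlinear functional -/

lemma abs_G_le_add_integral {l p r : ℝ → ℝ → ℝ} {M : ℝ} (hr : IsKernelBound r M)
    {wh wt g : ℝ → ℝ} (hg : IntervalIntegrable g volume 0 1)
    (hP : ∀ y ∈ Set.Icc (0 : ℝ) 1, opP p wt y ^ 2 ≤ g y)
    (hP1 : ∀ y ∈ Set.Icc (0 : ℝ) 1, (deriv wt y + opP1 p wt y) ^ 2 ≤ g y)
    (hL : ∀ y ∈ Set.Icc (0 : ℝ) 1, opL l wh y ^ 2 ≤ g y)
    (hL1 : ∀ y ∈ Set.Icc (0 : ℝ) 1, (deriv wh y + opL1 l wh y) ^ 2 ≤ g y)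
    {x : ℝ} (hx : x ∈ Set.Icc (0 : ℝ) 1) :
    |G l p r wh wt x| ≤ 4 * (g x + M * ∫ y in (0 : ℝ)..1, g y) := by
  refine (abs_sub _ _).trans ((add_le_add_left (abs_add_three _ _ _) _).trans ?_)
  linarith [abs_opR_mul_le hr hg hP hP1 hx, abs_opR_mul_le hr hg hP hL1 hx,
    abs_opR_mul_le hr hg hL hP1 hx, abs_opR_mul_le hr hg hL hL1 hx]

lemma abs_G_le_energyH1 {l p r : ℝ → ℝ → ℝ} {M : ℝ} (hM : 1 ≤ M)
    (hl : IsKernelBound l M) (hp : IsKernelBound p M) (hr : IsKernelBound r M)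
    (hlx : IsKernelBound (pdx l) M) (hpx : IsKernelBound (pdx p) M) {wh wt : ℝ → ℝ}
    (hwh : HasSqIntegrableDeriv wh) (hwt : HasSqIntegrableDeriv wt)
    {x : ℝ} (hx : x ∈ Set.Icc (0 : ℝ) 1) :
    |G l p r wh wt x| ≤ 36 * M ^ 3 * (energyH1 wt x + energyH1 wh x) := by
  set E : ℝ → ℝ := fun y => energyH1 wt y + energyH1 wh y with hE
  have hEint : IntervalIntegrable E volume 0 1 :=
    hwt.intervalIntegrable_energyH1.add hwh.intervalIntegrable_energyH1
  have hE0 : 0 ≤ E x := add_nonneg (energyH1_nonneg _ _) (energyH1_nonneg _ _)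
  have hintE : ∫ y in (0 : ℝ)..1, E y ≤ 2 * E x := by
    rw [hE, intervalIntegral.integral_add hwt.intervalIntegrable_energyH1
      hwh.intervalIntegrable_energyH1]
    linarith [hwt.integral_energyH1_le x, hwh.integral_energyH1_le x]
  have hwtE (y : ℝ) : energyH1 wt y ≤ E y := le_add_of_nonneg_right (energyH1_nonneg _ _)
  have hwhE (y : ℝ) : energyH1 wh y ≤ E y := le_add_of_nonneg_left (energyH1_nonneg _ _)
  have hscale {s t : ℝ} (hst : s ≤ t) : 3 * M ^ 2 * s ≤ 3 * M ^ 2 * t :=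
    mul_le_mul_of_nonneg_left hst (by positivity)
  have hG : |G l p r wh wt x| ≤
      4 * (3 * M ^ 2 * E x + M * ∫ y in (0 : ℝ)..1, 3 * M ^ 2 * E y) := by
    refine abs_G_le_add_integral hr (hEint.const_mul _) (fun y hy => ?_) (fun y hy => ?_)
      (fun y hy => ?_) (fun y hy => ?_) hx
    · exact (sq_opP_le hM hp hwt.sqIntegrable hy).trans
        (hscale ((energy_le_energyH1 wt y).trans (hwtE y)))
    · exact (sq_add_opP1_le hM hp hpx hwt.sqIntegrable hy _).trans
        (hscale ((sq_deriv_add_energy_le_energyH1 wt y).trans (hwtE y)))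
    · exact (sq_opL_le hM hl hwh.sqIntegrable hy).trans
        (hscale ((energy_le_energyH1 wh y).trans (hwhE y)))
    · exact (sq_add_opL1_le hM hl hlx hwh.sqIntegrable hy _).trans
        (hscale ((sq_deriv_add_energy_le_energyH1 wh y).trans (hwhE y)))
  rw [intervalIntegral.integral_const_mul] at hG
  calc |G l p r wh wt x|
      ≤ 4 * (3 * M ^ 2 * E x + M * (3 * M ^ 2 * ∫ y in (0 : ℝ)..1, E y)) := hG
    _ ≤ 4 * (3 * M ^ 2 * (M * E x) + M * (3 * M ^ 2 * (2 * E x))) := by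
        gcongr
        exact le_mul_of_one_le_left hE0 hM
    _ = 36 * M ^ 3 * E x := by ring

theorem G_functional_bound_general {l p r : ℝ → ℝ → ℝ} (hl : IsBoundedKernel l)
    (hp : IsBoundedKernel p) (hr : IsBoundedKernel r) (hlx : IsBoundedKernel (pdx l))
    (hpx : IsBoundedKernel (pdx p)) :
    ∃ C > 0, ∀ wh wt : ℝ → ℝ, HasSqIntegrableDeriv wh → HasSqIntegrableDeriv wt →
      ∀ x ∈ Set.Icc (0 : ℝ) 1, |G l p r wh wt x| ≤ C * (energyH1 wt x + energyH1 wh x) := by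
  obtain ⟨M, hM, hMl, hMp, hMr, hMlx, hMpx⟩ := ((Filter.eventually_ge_atTop 1).and <|
    hl.eventually_isKernelBound.and <| hp.eventually_isKernelBound.and <|
    hr.eventually_isKernelBound.and <| hlx.eventually_isKernelBound.and
    hpx.eventually_isKernelBound).exists
  exact ⟨36 * M ^ 3, by positivity, fun wh wt hwh hwt x hx =>
    abs_G_le_energyH1 hM hMl hMp hMr hMlx hMpx hwh hwt hx⟩

lemma mul_energyH1_le {C : ℝ} (hC : 0 ≤ C) (v : ℝ → ℝ) (x : ℝ) :
    C * energyH1 v x ≤ C * (L2norm v + |v x|) * (L2norm (deriv v) + |deriv v x|)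
      + C * (L2norm v ^ 2 + |v x| ^ 2) + C * (L2norm (deriv v) ^ 2 + |deriv v x| ^ 2) := by
  have hprod : 0 ≤ C * (L2norm v + |v x|) * (L2norm (deriv v) + |deriv v x|) := by
    have := L2norm_nonneg v
    have := L2norm_nonneg (deriv v)
    positivity
  rw [energyH1, energy, energy]
  linarith

/-- Bound on the nonlinear functional
`G[ω̂,ω̃] = ℛ[𝒫[ω̃](ω̃' + 𝒫₁[ω̃])] + ℛ[𝒫[ω̃](ω̂' + 𝓛₁[ω̂])] + ℛ[𝓛[ω̂](ω̃' + 𝒫₁[ω̃])]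
− ℛ[𝓛[ω̂](ω̂' + 𝓛₁[ω̂])]`. -/
theorem G_functional_bound (k l p r : ℝ → ℝ → ℝ)
    (hk : ContinuousOn (Function.uncurry k) T)
    (hl : ContinuousOn (Function.uncurry l) T)
    (hp : ContinuousOn (Function.uncurry p) T)
    (hr : ContinuousOn (Function.uncurry r) T)
    (hlx : ContinuousOn (Function.uncurry (pdx l)) T)
    (hpx : ContinuousOn (Function.uncurry (pdx p)) T) :
    ∃ c₁ > (0:ℝ), ∃ c₂ > (0:ℝ), ∃ c₃ > (0:ℝ), ∃ c₄ > (0:ℝ), ∃ c₅ > (0:ℝ), ∃ c₆ > (0:ℝ),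
      ∀ wh wt : ℝ → ℝ, ContDiff ℝ 1 wh → ContDiff ℝ 1 wt → ∀ x ∈ Set.Icc (0:ℝ) 1,
        |opR r (fun x' => opP p wt x' * (deriv wt x' + opP1 p wt x')) x
          + opR r (fun x' => opP p wt x' * (deriv wh x' + opL1 l wh x')) x
          + opR r (fun x' => opL l wh x' * (deriv wt x' + opP1 p wt x')) x
          - opR r (fun x' => opL l wh x' * (deriv wh x' + opL1 l wh x')) x| ≤
          c₁ * (L2norm wt + |wt x|) * (L2norm (deriv wt) + |deriv wt x|)
          + c₂ * (L2norm wt ^ 2 + |wt x| ^ 2)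
          + c₃ * (L2norm (deriv wt) ^ 2 + |deriv wt x| ^ 2)
          + c₄ * (L2norm wh + |wh x|) * (L2norm (deriv wh) + |deriv wh x|)
          + c₅ * (L2norm wh ^ 2 + |wh x| ^ 2)
          + c₆ * (L2norm (deriv wh) ^ 2 + |deriv wh x| ^ 2) := by
  obtain ⟨C, hC, hG⟩ := G_functional_bound_general
    (isBoundedKernel_of_continuousOn hl) (isBoundedKernel_of_continuousOn hp)
    (isBoundedKernel_of_continuousOn hr) (isBoundedKernel_of_continuousOn hlx)
    (isBoundedKernel_of_continuousOn hpx)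
  exact ⟨C, hC, C, hC, C, hC, C, hC, C, hC, C, hC, fun wh wt hwh hwt x hx =>
    (hG wh wt (hasSqIntegrableDeriv_of_contDiff hwh) (hasSqIntegrableDeriv_of_contDiff hwt)
      x hx).trans (by linarith [mul_energyH1_le hC.le wt x, mul_energyH1_le hC.le wh x])⟩
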